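/- Let λ : G → A be a group homomorphism and write m_i′ := m_i − m_{i+1}. (1) If f : M³ → A is a G-invariant A-multilinear map, then ((f ⊗ id_A) ∘ ψ_{2,λ} ∘ γ₂)((m₀,g₀),(m₁,g₁),(m₂,g₂)) = f(m₀′ − m₀′·(φ(g₁)⁻¹g₁), m₁′, m₂ − m₂·(φ(g₂)g₂⁻¹)) ⊗ λ(g₀) for all m₀,m₁,m₂ ∈ M and g₀,g₁,g₂ ∈ G. (2) If f : M⁴ → A is a G-invariant A-multilinear map, then ((f ⊗ id_A) ∘ ψ_{3,λ} ∘ γ₃)((m₀,g₀),(m₁,g₁),(m₂,g₂),(m₃,g₃)) = [f(m₀′ − m₀′·(φ(g₁)⁻¹g₁), m₁′, m₂′, m₃ − m₃·(φ(g₃)g₃⁻¹)) − f((m₀′ − m₀′·(φ(g₁)⁻¹g₁))g₂, m₁′g₂, m₂′φ(g₂), (m₃ − m₃·(φ(g₃)g₃⁻¹))φ(g₂))] ⊗ λ(g₀) for all m₀,…,m₃ ∈ M and g₀,…,g₃ ∈ G. (These are the values of the 2- and 3-cocycles Φ_{f,λ} of the G-Alexander multiple conjugation biquandle with X-set X on the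 generators all of whose blocks are singletons.) -/

import Mathlib

open FreeAbelianGroup
open scoped TensorProduct

namespace GAlex

variable {G M A : Type*} [Group G] [AddCommGroup M] [DistribMulAction Gᵐᵒᵖ M] [AddCommGroup A]

/-- The right action `m · g` of a group element `g : G` on `m : M`
(coming from the right `ℤ[G]`-module structure on `M`). -/
def ract (m : M) (g : G) : M := MulOpposite.op g • m

variable (φ : G →* G)

/-- The operation `(m,g) ⊳ (n,h) = (mh + n(φ(h) − h), h⁻¹gh)` of the `G`-Alexander biquandle. -/
def under (x y : M × G) : M × G :=
  (ract x.1 y.2 + ract y.1 (φ y.2) - ract y.1 y.2, y.2⁻¹ * x.2 * y.2)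

/-- The operation `(m,g) ⊚ (n,h) = (mφ(h), g)` of the `G`-Alexander biquandle. -/
def overOp (x y : M × G) : M × G := (ract x.1 (φ y.2), x.2)

/-- The face `g_{⟨p⟩}` (delete the `p`-th entry). -/
def dGdel (n : ℕ) (p : Fin (n + 1)) (g : Fin (n + 1) → G) : Fin n → G :=
  fun j => g (p.succAbove j)

/-- The face `g_{⟨⊲p⟩}` (conjugate the first entries by `g p` and delete the `p`-th entry). -/
def dGconj (n : ℕ) (p : Fin (n + 1)) (g : Fin (n + 1) → G) : Fin n → G :=
  fun j => if (j : ℕ) < (p : ℕ) then (g p)⁻¹ * g j.castSucc * g p else g j.succ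

/-- The face `m_{⟨p⟩}` (merge the two entries adjacent to position `p`;
for `p = 0` drop the first entry). -/
def dMmer (n : ℕ) (p : Fin (n + 1)) (m : Fin (n + 1) → M) : Fin n → M :=
  fun j =>
    if (j : ℕ) + 1 < (p : ℕ) then m j.castSucc
    else if (j : ℕ) + 1 = (p : ℕ) then m j.castSucc + m j.succ
    else m j.succ

/-- The face `m_{⟨⊲p⟩}`. -/
def dMconj (n : ℕ) (p : Fin (n + 1)) (g : Fin (n + 1) → G) (m : Fin (n + 1) → M) : Fin n → M :=
  fun j =>
    if (j : ℕ) + 1 < (p : ℕ) then ract (m j.castSucc) (g p)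
    else if (j : ℕ) + 1 = (p : ℕ) then ract (m j.castSucc) (g p) + ract (m j.succ) (φ (g p))
    else ract (m j.succ) (φ (g p))

/-- The boundary map `∂^{BR_U}_{n+1} : C^{BR_U}_{n+1}(X;ℤ) → C^{BR_U}_n(X;ℤ)`
(the boundary `∂^{BR_U}_k` is `0` for `k ≤ 1`, which agrees with this formula at `n = 0`). -/
def dBRU (n : ℕ) :
    FreeAbelianGroup ((Fin (n + 1) → G) × (Fin (n + 1) → M)) →+
      FreeAbelianGroup ((Fin n → G) × (Fin n → M)) :=
  FreeAbelianGroup.lift fun x =>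
    ∑ p : Fin (n + 1),
      (-1 : ℤ) ^ (p : ℕ) •
        (FreeAbelianGroup.of (dGdel n p x.1, dMmer n p x.2) -
          FreeAbelianGroup.of (dGconj n p x.1, dMconj φ n p x.1 x.2))

/-- The birack boundary map `∂^{BR}_{n+1} : C^{BR}_{n+1}(X;ℤ) → C^{BR}_n(X;ℤ)`
for the `G`-Alexander biquandle `X = M × G` (with trivial `X`-set). -/
def dBR (n : ℕ) :
    FreeAbelianGroup (Fin (n + 1) → M × G) →+ FreeAbelianGroup (Fin n → M × G) :=
  FreeAbelianGroup.lift fun x =>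
    ∑ p : Fin (n + 1),
      (-1 : ℤ) ^ (p : ℕ) •
        (FreeAbelianGroup.of (fun j => x (p.succAbove j)) -
          FreeAbelianGroup.of (fun j : Fin n =>
            if (j : ℕ) < (p : ℕ) then under φ (x j.castSucc) (x p)
            else overOp φ (x j.succ) (x p)))

/-- `γ_n((m₁,g₁),…,(m_n,g_n)) = (g₁,…,g_n; m₁−m₂, …, m_{n−1}−m_n, m_n)`. -/
def gammaMap (n : ℕ) :
    FreeAbelianGroup (Fin n → M × G) →+ FreeAbelianGroup ((Fin n → G) × (Fin n → M)) :=
  FreeAbelianGroup.lift fun x =>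
    FreeAbelianGroup.of
      (fun j => (x j).2,
       fun j => (x j).1 - if h : (j : ℕ) + 1 < n then (x ⟨(j : ℕ) + 1, h⟩).1 else 0)

/-- `r_n(g₁,…,g_n; m₁,…,m_n) = ((m₁+⋯+m_n, g₁), (m₂+⋯+m_n, g₂), …, (m_n, g_n))`. -/
def rMap (n : ℕ) :
    FreeAbelianGroup ((Fin n → G) × (Fin n → M)) →+ FreeAbelianGroup (Fin n → M × G) :=
  FreeAbelianGroup.lift fun p =>
    FreeAbelianGroup.of fun j => ((∑ i ∈ Finset.Ici j, p.2 i), p.1 j)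

/-- The boundary map `∂^{BR_U}_{d+1}` of `C^{BR_U}_*(X;ℤ)_X` (the version with `X`-set `X`,
whose degree-`d` chain group is free on `(1+d)`-tuples); it is `0` in degrees `≤ 1`. -/
def dBRUX : (d : ℕ) →
    FreeAbelianGroup ((Fin (d + 2) → G) × (Fin (d + 2) → M)) →+
      FreeAbelianGroup ((Fin (d + 1) → G) × (Fin (d + 1) → M))
  | 0 => 0
  | d + 1 =>
    FreeAbelianGroup.lift fun x =>
      ∑ i : Fin (d + 2),
        (-1 : ℤ) ^ (i : ℕ) •
          (FreeAbelianGroup.of (dGdel (d + 2) i.succ x.1, dMmer (d + 2) i.succ x.2) -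
            FreeAbelianGroup.of (dGconj (d + 2) i.succ x.1, dMconj φ (d + 2) i.succ x.1 x.2))

/-- The boundary map `∂^{BR}_{d+1}` of `C^{BR}_*(X;ℤ)_X` (the version with `X`-set `X`);
it is `0` in degrees `≤ 1`. -/
def dBRX : (d : ℕ) →
    FreeAbelianGroup (Fin (d + 2) → M × G) →+ FreeAbelianGroup (Fin (d + 1) → M × G)
  | 0 => 0
  | d + 1 =>
    FreeAbelianGroup.lift fun x =>
      ∑ i : Fin (d + 2),
        (-1 : ℤ) ^ (i : ℕ) •
          (FreeAbelianGroup.of (fun j => x (i.succ.succAbove j)) -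
            FreeAbelianGroup.of (fun j : Fin (d + 2) =>
              if (j : ℕ) < (i : ℕ) + 1 then under φ (x j.castSucc) (x i.succ)
              else overOp φ (x j.succ) (x i.succ)))


/-- The subgroup of `G`-coinvariants relations in `C^{gp}_n(M;ℤ)`:
generated by all `(m₁g,…,m_ng) − (m₁,…,m_n)`. -/
def coinvSub (n : ℕ) : AddSubgroup (FreeAbelianGroup (Fin n → M)) :=
  AddSubgroup.closure
    {z | ∃ (m : Fin n → M) (g : G),
        z = FreeAbelianGroup.of (fun i => ract (m i) g) - FreeAbelianGroup.of m}

/-- The coinvariant group chain group `C^{gp}_n(M;ℤ)_G`. -/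
abbrev CgpG (n : ℕ) : Type _ :=
  FreeAbelianGroup (Fin n → M) ⧸ coinvSub (G := G) (M := M) n

/-- The group-homology boundary map `∂^{gp}_{n+1} : C^{gp}_{n+1}(M;ℤ) → C^{gp}_n(M;ℤ)`
(it is `0` in degrees `≤ 1`, which agrees with this formula at `n = 0`). -/
def dgp (n : ℕ) :
    FreeAbelianGroup (Fin (n + 1) → M) →+ FreeAbelianGroup (Fin n → M) :=
  FreeAbelianGroup.lift fun m =>
    (∑ p : Fin (n + 1), (-1 : ℤ) ^ (p : ℕ) • FreeAbelianGroup.of (dMmer n p m)) +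
      (-1 : ℤ) ^ (n + 1) • FreeAbelianGroup.of fun j : Fin n => m j.castSucc

/-- `|k| = k₁ + ⋯ + k_n`. -/
def wt {n : ℕ} (k : Fin n → Bool) : ℕ := ∑ i, if k i then 1 else 0

/-- `g_{k,i} = φ(g₀^{k₀} ⋯ g_i^{k_i}) · g_{i+1}^{k_{i+1}} ⋯ g_{n-1}^{k_{n-1}}`
(indices written `0`-based; the products are ordered). -/
def gki {n : ℕ} (g : Fin n → G) (k : Fin n → Bool) (i : Fin n) : G :=
  φ ((((List.finRange n).filter fun j => decide (j ≤ i)).map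
        fun j => if k j then g j else 1).prod) *
    (((List.finRange n).filter fun j => decide (i < j)).map
        fun j => if k j then g j else 1).prod

/-- The value of `ψ` on a generator:
`Σ_{k, k₀ = 0} (−1)^{|k|} (m₀ g_{k,0}, …, m_n g_{k,n})`, as an element of the free
abelian group (before passing to coinvariants). -/
def psiVal (n : ℕ) (x : (Fin (n + 1) → G) × (Fin (n + 1) → M)) :
    FreeAbelianGroup (Fin (n + 1) → M) :=
  ∑ k ∈ Finset.univ.filter fun k : Fin (n + 1) → Bool => k 0 = false,
    (-1 : ℤ) ^ wt k • FreeAbelianGroup.of fun i => ract (x.2 i) (gki φ x.1 k i)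

/-- `ψ` as a homomorphism into the free abelian group (before coinvariants). -/
def psiFree (n : ℕ) :
    FreeAbelianGroup ((Fin (n + 1) → G) × (Fin (n + 1) → M)) →+
      FreeAbelianGroup (Fin (n + 1) → M) :=
  FreeAbelianGroup.lift (psiVal φ n)

/-- The homomorphism `ψ : C^{BR_U} → C^{gp}(M;ℤ)_G`. -/
def psiG (n : ℕ) :
    FreeAbelianGroup ((Fin (n + 1) → G) × (Fin (n + 1) → M)) →+
      CgpG (G := G) (M := M) (n + 1) :=
  (QuotientAddGroup.mk' (coinvSub (G := G) (M := M) (n + 1))).comp (psiFree φ n)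

/-- The homomorphism `ψ_{•,λ}`, sending a generator `x` to `ψ(x) ⊗ λ(x₁)` where `x₁` is the
first `G`-entry of `x`. -/
noncomputable def psiLam (lam : G → A) (n : ℕ) :
    FreeAbelianGroup ((Fin (n + 1) → G) × (Fin (n + 1) → M)) →+
      TensorProduct ℤ (CgpG (G := G) (M := M) (n + 1)) A :=
  FreeAbelianGroup.lift fun x =>
    (QuotientAddGroup.mk' (coinvSub (G := G) (M := M) (n + 1)) (psiVal φ n x)) ⊗ₜ[ℤ]
      lam (x.1 0)

/-- `D^{gp}_n(M;ℤ)_G`: the image in the coinvariants of the subgroup generated by tuples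
with a vanishing entry in a position `1 ≤ i ≤ n−1`. -/
def DgpGsub (n : ℕ) : AddSubgroup (CgpG (G := G) (M := M) n) :=
  (AddSubgroup.closure
      {z : FreeAbelianGroup (Fin n → M) |
        ∃ (m : Fin n → M) (i : Fin n),
          (i : ℕ) + 1 < n ∧ m i = 0 ∧ z = FreeAbelianGroup.of m}).map
    (QuotientAddGroup.mk' (coinvSub (G := G) (M := M) n))

/-!
Pair the summands of `ψ` that differ only in the exponent `k₁`. Changing `k₁` from `0` to `1`
multiplies every `g_{k,i}` by the central element `φ(g₁)`, except `g_{k,0}`, which is multiplied by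
`g₁`; after translating back by `φ(g₁)⁻¹`, an invariant `f` sees the two summands differ in the
entry `0` alone, so additivity in that entry merges them into a single value at
`m₀ − m₀·(φ(g₁)⁻¹g₁)`. The exponent `k_n` of the last group element acts in the same way on the last
entry. What remains is an alternating sum over the inner exponents `k₂, …, k_{n-1}`: one term for
`n = 2`, two terms for `n = 3`.
-/

theorem ract_one (m : M) : ract m (1 : G) = m := by
  simp [ract]

theorem ract_ract (m : M) (g h : G) : ract (ract m g) h = ract m (g * h) := by
  simp [ract, mul_smul]

theorem ract_sub (m n : M) (g : G) : ract (m - n) g = ract m g - ract n g := by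
  simp [ract, smul_sub]

/-- Additivity of a function of a tuple in its entry `p`, the other entries being fixed: the
condition at `p` in the definition of a multilinear map. -/
def AdditiveAt {ι : Type*} [DecidableEq ι] (f : (ι → M) → A) (p : ι) : Prop :=
  ∀ v x y, f (Function.update v p (x + y)) =
    f (Function.update v p x) + f (Function.update v p y)

variable (G) in
/-- Invariance of a function of a tuple under the diagonal right action of `G`. -/
def RactInvariant {ι : Type*} (f : (ι → M) → A) : Prop :=
  ∀ (v : ι → M) (h : G), f (fun i => ract (v i) h) = f v

theorem AdditiveAt.map_update_sub {ι : Type*} [DecidableEq ι] {f : (ι → M) → A} {p : ι}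
    (hf : AdditiveAt f p) (v : ι → M) (x y : M) :
    f (Function.update v p (x - y)) = f (Function.update v p x) - f (Function.update v p y) := by
  rw [eq_sub_iff_add_eq, ← hf, sub_add_cancel]

theorem map_ract_sub_map_ract {ι : Type*} [DecidableEq ι] {f : (ι → M) → A} {p : ι}
    (hf : AdditiveAt f p) (hG : RactInvariant G f) (m : ι → M) {c c' : ι → G} {u h : G}
    (hne : ∀ i, i ≠ p → c' i = c i * h) (hp : c' p = u * c p * h) :
    f (fun i => ract (m i) (c i)) - f (fun i => ract (m i) (c' i)) =
      f (fun i => ract (Function.update m p (m p - ract (m p) u) i) (c i)) := by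
  have update_ract (y : M) : (fun i => ract (Function.update m p y i) (c i)) =
      Function.update (fun i => ract (m i) (c i)) p (ract y (c p)) :=
    funext fun i => Function.apply_update (fun i x => ract x (c i)) m p y i
  have translate : (fun i => ract (m i) (c' i)) =
      fun i => ract (ract (Function.update m p (ract (m p) u) i) (c i)) h := by
    funext i
    rcases eq_or_ne i p with rfl | hi
    · simp only [Function.update_self, ract_ract, hp, mul_assoc]
    · simp only [Function.update_of_ne hi, ract_ract, hne i hi]
  rw [translate, hG, update_ract, update_ract, ract_sub, hf.map_update_sub,
    Function.update_eq_self p fun i => ract (m i) (c i)]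

theorem wt_update_true {n : ℕ} {k : Fin n → Bool} {p : Fin n} (hk : k p = false) :
    wt (Function.update k p true) = wt k + 1 := by
  have off_p : ∑ i ∈ {p}ᶜ, (if Function.update k p true i then 1 else 0) =
      ∑ i ∈ {p}ᶜ, if k i then 1 else 0 :=
    Finset.sum_congr rfl fun i hi => by
      rw [Function.update_of_ne (by simpa using hi)]
  simp only [wt, Fintype.sum_eq_add_sum_compl p, off_p, Function.update_self, hk]
  simp [add_comm]

theorem sum_alternating_filter_eq {n : ℕ} (p : Fin n) {Q : (Fin n → Bool) → Prop}
    [DecidablePred Q] (hQ : ∀ k b, Q (Function.update k p b) ↔ Q k) {F F' : (Fin n → Bool) → A}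
    (hF : ∀ k, Q k → k p = false → F k - F (Function.update k p true) = F' k) :
    ∑ k with Q k, (-1 : ℤ) ^ wt k • F k =
      ∑ k with Q k ∧ k p = false, (-1 : ℤ) ^ wt k • F' k := by
  have sum_true_eq : ∑ k with Q k ∧ ¬k p = false, (-1 : ℤ) ^ wt k • F k =
      ∑ k with Q k ∧ k p = false,
        (-1 : ℤ) ^ wt (Function.update k p true) • F (Function.update k p true) := by
    have update_self_of_true {k : Fin n → Bool} (hk : k p = true) :
        Function.update k p true = k := by
      rw [← hk, Function.update_eq_self]
    refine Finset.sum_nbij' (Function.update · p false) (Function.update · p true)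
      ?_ ?_ ?_ ?_ ?_ <;>
      simp +contextual [hQ, update_self_of_true]
  rw [← Finset.sum_filter_add_sum_filter_not _ fun k => k p = false, Finset.filter_filter,
    Finset.filter_filter, sum_true_eq, ← Finset.sum_add_distrib]
  refine Finset.sum_congr rfl fun k hk => ?_
  obtain ⟨hQk, hkp⟩ := (Finset.mem_filter.1 hk).2
  rw [wt_update_true hkp, ← hF k hQk hkp, pow_succ, mul_neg_one, neg_smul, smul_sub, sub_eq_add_neg]

theorem prod_filter_le_mul_prod_filter_lt {α N : Type*} [LinearOrder α] [Monoid N] (a b : α → N)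
    (i : α) {l : List α} (hl : l.Pairwise (· < ·)) :
    ((l.filter fun j => decide (j ≤ i)).map a).prod *
        ((l.filter fun j => decide (i < j)).map b).prod =
      (l.map fun j => if j ≤ i then a j else b j).prod := by
  induction l with
  | nil => simp
  | cons x l ih =>
    obtain ⟨hx, hl⟩ := List.pairwise_cons.1 hl
    rcases le_or_gt x i with hxi | hix
    · simp [hxi, hxi.not_gt, mul_assoc, ← ih hl]
    · have filter_le : (l.filter fun j => decide (j ≤ i)) = [] :=
        List.filter_eq_nil_iff.2 fun j hj => by simpa using hix.trans (hx j hj)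
      simp [hix, hix.not_ge, filter_le, ← ih hl]

theorem gki_eq_prod_ofFn {n : ℕ} (g : Fin n → G) (k : Fin n → Bool) (i : Fin n) :
    gki φ g k i =
      (List.ofFn fun j => if k j then if j ≤ i then φ (g j) else g j else 1).prod := by
  rw [gki, map_list_prod, List.map_map,
    prod_filter_le_mul_prod_filter_lt _ _ _ (List.pairwise_lt_finRange n), List.ofFn_eq_map]
  congr 2
  funext j
  cases hk : k j <;> simp [hk]

theorem gki_update_one {n : ℕ} (g : Fin (n + 2) → G) {k : Fin (n + 2) → Bool} (h₀ : k 0 = false)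
    (h₁ : k 1 = false) (i : Fin (n + 2)) :
    gki φ g (Function.update k 1 true) i =
      (if i = 0 then g 1 else φ (g 1)) * gki φ g k i := by
  have ne_one (j : Fin n) : j.succ.succ ≠ 1 := by
    simp [Fin.ext_iff]
  have one_le : 1 ≤ i ↔ i ≠ 0 := by
    rw [← Fin.succ_zero_eq_one, ← Fin.castSucc_lt_iff_succ_le, Fin.castSucc_zero,
      Fin.pos_iff_ne_zero]
  simp only [gki_eq_prod_ofFn, List.ofFn_succ, List.prod_cons, Fin.succ_zero_eq_one,
    Function.update_self, Function.update_of_ne (ne_one _), Function.update_of_ne zero_ne_one,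
    h₀, h₁, one_le]
  split_ifs <;> simp_all

theorem gki_update_last {n : ℕ} (g : Fin (n + 1) → G) {k : Fin (n + 1) → Bool}
    (hk : k (Fin.last n) = false) (i : Fin (n + 1)) :
    gki φ g (Function.update k (Fin.last n) true) i =
      gki φ g k i * if i = Fin.last n then φ (g (Fin.last n)) else g (Fin.last n) := by
  simp only [gki_eq_prod_ofFn, List.ofFn_succ_last, List.prod_append, List.prod_singleton,
    Function.update_self, Function.update_of_ne (Fin.castSucc_lt_last _).ne, hk, Fin.last_le_iff,
    if_true, Bool.false_eq_true, if_false, mul_one]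

theorem gki_last_mem_center {n : ℕ} (hφ : ∀ g : G, φ g ∈ Subgroup.center G)
    (g : Fin (n + 1) → G) (k : Fin (n + 1) → Bool) :
    gki φ g k (Fin.last n) ∈ Subgroup.center G := by
  rw [gki_eq_prod_ofFn]
  refine Subgroup.list_prod_mem _ fun x hx => ?_
  obtain ⟨j, rfl⟩ := List.mem_ofFn.1 hx
  cases k j <;> simp [Fin.le_last, hφ, one_mem]

theorem map_ract_gki_sub_update_one (hφ : ∀ g : G, φ g ∈ Subgroup.center G) {n : ℕ}
    {f : (Fin (n + 2) → M) → A} (hf : AdditiveAt f 0) (hG : RactInvariant G f)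
    (g : Fin (n + 2) → G) (m : Fin (n + 2) → M) {k : Fin (n + 2) → Bool} (hk₀ : k 0 = false)
    (hk₁ : k 1 = false) :
    f (fun i => ract (m i) (gki φ g k i)) -
        f (fun i => ract (m i) (gki φ g (Function.update k 1 true) i)) =
      f fun i => ract (Function.update m 0 (m 0 - ract (m 0) ((φ (g 1))⁻¹ * g 1)) i)
        (gki φ g k i) := by
  have φ_comm (a : G) : φ (g 1) * a = a * φ (g 1) :=
    (Subgroup.mem_center_iff.1 (hφ (g 1)) a).symm
  apply map_ract_sub_map_ract hf hG m (h := φ (g 1))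
  · intro i hi
    rw [gki_update_one φ g hk₀ hk₁, if_neg hi, φ_comm]
  · rw [gki_update_one φ g hk₀ hk₁, if_pos rfl, ← φ_comm, mul_assoc, mul_inv_cancel_left]

theorem map_ract_gki_sub_update_last (hφ : ∀ g : G, φ g ∈ Subgroup.center G) {n : ℕ}
    {f : (Fin (n + 1) → M) → A}
    (hf : AdditiveAt f (Fin.last n)) (hG : RactInvariant G f)
    (g : Fin (n + 1) → G) (m : Fin (n + 1) → M) {k : Fin (n + 1) → Bool}
    (hk : k (Fin.last n) = false) :
    f (fun i => ract (m i) (gki φ g k i)) -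
        f (fun i => ract (m i) (gki φ g (Function.update k (Fin.last n) true) i)) =
      f fun i => ract (Function.update m (Fin.last n) (m (Fin.last n) -
        ract (m (Fin.last n)) (φ (g (Fin.last n)) * (g (Fin.last n))⁻¹)) i) (gki φ g k i) := by
  have last_comm (a : G) : a * gki φ g k (Fin.last n) = gki φ g k (Fin.last n) * a :=
    Subgroup.mem_center_iff.1 (gki_last_mem_center φ hφ g k) a
  apply map_ract_sub_map_ract hf hG m (h := g (Fin.last n))
  · intro i hi
    rw [gki_update_last φ g hk, if_neg hi]
  · rw [gki_update_last φ g hk, if_pos rfl, last_comm, mul_assoc, inv_mul_cancel_right]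

/-- The tuple `(m₁ − m₂, …, m_{n-1} − m_n, m_n)` of `M`-entries of `γ_n`. -/
def consecutiveDiff {n : ℕ} (m : Fin n → M) : Fin n → M :=
  fun j => m j - if h : (j : ℕ) + 1 < n then m ⟨(j : ℕ) + 1, h⟩ else 0

theorem gammaMap_of {N H : Type*} [AddCommGroup N] {n : ℕ} (x : Fin n → N × H) :
    gammaMap n (FreeAbelianGroup.of x) =
      FreeAbelianGroup.of (fun j => (x j).2, consecutiveDiff fun j => (x j).1) :=
  FreeAbelianGroup.lift_apply_of _ _

/-- The tuple `(m₀ − m₀·(φ(g₁)⁻¹g₁), m₁, …, m_{n-1}, m_n − m_n·(φ(g_n)g_n⁻¹))` at which the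
exponents `k₁` and `k_n` have been summed out of `ψ_n`; here `n` is written `n + 2`, so that
`g₁` and `g_n` are distinct entries. -/
def endTwist {n : ℕ} (g : Fin (n + 3) → G) (m : Fin (n + 3) → M) : Fin (n + 3) → M :=
  Function.update (Function.update m 0 (m 0 - ract (m 0) ((φ (g 1))⁻¹ * g 1))) (Fin.last _)
    (m (Fin.last _) - ract (m (Fin.last _)) (φ (g (Fin.last _)) * (g (Fin.last _))⁻¹))

theorem lift_psiVal_eq_sum_endTwist (hφ : ∀ g : G, φ g ∈ Subgroup.center G) {n : ℕ}
    {f : (Fin (n + 3) → M) → A}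
    (h_first : AdditiveAt f 0) (h_last : AdditiveAt f (Fin.last _))
    (hG : RactInvariant G f)
    (g : Fin (n + 3) → G) (m : Fin (n + 3) → M) :
    FreeAbelianGroup.lift f (psiVal φ (n + 2) (g, m)) =
      ∑ k : Fin (n + 3) → Bool with (k 0 = false ∧ k 1 = false) ∧ k (Fin.last _) = false,
        (-1 : ℤ) ^ wt k • f fun i => ract (endTwist φ g m i) (gki φ g k i) := by
  have last_ne_zero : Fin.last (n + 2) ≠ 0 := Fin.last_pos.ne'
  have last_ne_one : Fin.last (n + 2) ≠ 1 := by simp [Fin.ext_iff]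
  simp only [psiVal, map_sum, map_zsmul, FreeAbelianGroup.lift_apply_of]
  rw [sum_alternating_filter_eq 1 (by simp) fun _ =>
      map_ract_gki_sub_update_one φ hφ h_first hG g m,
    sum_alternating_filter_eq (Fin.last _)
      (by simp [Function.update_of_ne last_ne_one.symm]) fun _ _ =>
        map_ract_gki_sub_update_last φ hφ h_last hG g _]
  simp only [Function.update_of_ne last_ne_zero, endTwist]

theorem sum_inner_exponents_two (F : (Fin 3 → Bool) → A) :
    ∑ k : Fin 3 → Bool with (k 0 = false ∧ k 1 = false) ∧ k (Fin.last _) = false,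
      (-1 : ℤ) ^ wt k • F k = F fun _ => false := by
  have index_set : (Finset.univ.filter fun k : Fin 3 → Bool =>
      (k 0 = false ∧ k 1 = false) ∧ k (Fin.last _) = false) = {fun _ => false} := by
    decide
  have wt_zero : wt (fun _ : Fin 3 => false) = 0 := by decide
  rw [index_set, Finset.sum_singleton, wt_zero, pow_zero, one_smul]

theorem sum_inner_exponents_three (F : (Fin 4 → Bool) → A) :
    ∑ k : Fin 4 → Bool with (k 0 = false ∧ k 1 = false) ∧ k (Fin.last _) = false,
      (-1 : ℤ) ^ wt k • F k = F (fun _ => false) - F ![false, false, true, false] := by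
  have index_set : (Finset.univ.filter fun k : Fin 4 → Bool =>
      (k 0 = false ∧ k 1 = false) ∧ k (Fin.last _) = false) =
        {fun _ => false, ![false, false, true, false]} := by
    decide
  have wt_zero : wt (fun _ : Fin 4 => false) = 0 := by decide
  have wt_one : wt ![false, false, true, false] = 1 := by decide
  rw [index_set, Finset.sum_pair (by decide), wt_zero, wt_one, pow_zero, one_smul, pow_one,
    neg_one_zsmul, sub_eq_add_neg]

theorem mcbX_cocycle_formulas_general {B : Type*} [AddCommGroup B]
    (hφ : ∀ g : G, φ g ∈ Subgroup.center G) (lam : G → B) {n : ℕ} {f : (Fin (n + 3) → M) → A}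
    (h_first : AdditiveAt f 0) (h_last : AdditiveAt f (Fin.last _))
    (hG : RactInvariant G f) (x : Fin (n + 3) → M × G) :
    (FreeAbelianGroup.lift fun y : (Fin (n + 3) → G) × (Fin (n + 3) → M) =>
        FreeAbelianGroup.lift f (psiVal φ (n + 2) y) ⊗ₜ[ℤ] lam (y.1 0))
      (gammaMap (n + 3) (FreeAbelianGroup.of x)) =
    (∑ k : Fin (n + 3) → Bool with (k 0 = false ∧ k 1 = false) ∧ k (Fin.last _) = false,
      (-1 : ℤ) ^ wt k • f fun i =>
        ract (endTwist φ (fun j => (x j).2) (consecutiveDiff fun j => (x j).1) i)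
          (gki φ (fun j => (x j).2) k i)) ⊗ₜ[ℤ] lam (x 0).2 := by
  rw [gammaMap_of, FreeAbelianGroup.lift_apply_of,
    lift_psiVal_eq_sum_endTwist φ hφ h_first h_last hG]

/-- Values of the `2`- and `3`-cocycles `Φ_{f,λ}` of the `G`-Alexander
multiple conjugation biquandle with `X`-set `X` on the generators all of whose blocks are
singletons, with `mᵢ' = mᵢ − mᵢ₊₁`:
`((f ⊗ id_A) ∘ ψ_{2,λ} ∘ γ₂)((m₀,g₀),(m₁,g₁),(m₂,g₂)) =
   f(m₀' − m₀'·(φ(g₁)⁻¹g₁), m₁', m₂ − m₂·(φ(g₂)g₂⁻¹)) ⊗ λ(g₀)` and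
`((f ⊗ id_A) ∘ ψ_{3,λ} ∘ γ₃)((m₀,g₀),…,(m₃,g₃)) =
   [f(m₀' − m₀'·(φ(g₁)⁻¹g₁), m₁', m₂', m₃ − m₃·(φ(g₃)g₃⁻¹))
     − f((m₀' − m₀'·(φ(g₁)⁻¹g₁))g₂, m₁'g₂, m₂'φ(g₂), (m₃ − m₃·(φ(g₃)g₃⁻¹))φ(g₂))] ⊗ λ(g₀)`. -/
theorem mcbX_cocycle_formulas (hφ : ∀ g : G, φ g ∈ Subgroup.center G)
    (lam : G → A) (hlam : ∀ g h : G, lam (g * h) = lam g + lam h) :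
    (∀ f : M → M → M → A,
      (∀ m m' n p : M, f (m + m') n p = f m n p + f m' n p) →
      (∀ m n n' p : M, f m (n + n') p = f m n p + f m n' p) →
      (∀ m n p p' : M, f m n (p + p') = f m n p + f m n p') →
      (∀ (m n p : M) (g : G), f (ract m g) (ract n g) (ract p g) = f m n p) →
      ∀ (m₀ m₁ m₂ : M) (g₀ g₁ g₂ : G),
        (FreeAbelianGroup.lift fun x : (Fin 3 → G) × (Fin 3 → M) =>
            (FreeAbelianGroup.lift (fun v : Fin 3 → M => f (v 0) (v 1) (v 2))
              (psiVal φ 2 x)) ⊗ₜ[ℤ] lam (x.1 0))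
          (gammaMap 3 (FreeAbelianGroup.of ![(m₀, g₀), (m₁, g₁), (m₂, g₂)])) =
        f ((m₀ - m₁) - ract (m₀ - m₁) ((φ g₁)⁻¹ * g₁)) (m₁ - m₂)
            (m₂ - ract m₂ (φ g₂ * g₂⁻¹)) ⊗ₜ[ℤ] lam g₀) ∧
    (∀ f : M → M → M → M → A,
      (∀ m m' n p q : M, f (m + m') n p q = f m n p q + f m' n p q) →
      (∀ m n n' p q : M, f m (n + n') p q = f m n p q + f m n' p q) →
      (∀ m n p p' q : M, f m n (p + p') q = f m n p q + f m n p' q) →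
      (∀ m n p q q' : M, f m n p (q + q') = f m n p q + f m n p q') →
      (∀ (m n p q : M) (g : G),
        f (ract m g) (ract n g) (ract p g) (ract q g) = f m n p q) →
      ∀ (m₀ m₁ m₂ m₃ : M) (g₀ g₁ g₂ g₃ : G),
        (FreeAbelianGroup.lift fun x : (Fin 4 → G) × (Fin 4 → M) =>
            (FreeAbelianGroup.lift (fun v : Fin 4 → M => f (v 0) (v 1) (v 2) (v 3))
              (psiVal φ 3 x)) ⊗ₜ[ℤ] lam (x.1 0))
          (gammaMap 4
            (FreeAbelianGroup.of ![(m₀, g₀), (m₁, g₁), (m₂, g₂), (m₃, g₃)])) =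
        (f ((m₀ - m₁) - ract (m₀ - m₁) ((φ g₁)⁻¹ * g₁)) (m₁ - m₂) (m₂ - m₃)
              (m₃ - ract m₃ (φ g₃ * g₃⁻¹)) -
            f (ract ((m₀ - m₁) - ract (m₀ - m₁) ((φ g₁)⁻¹ * g₁)) g₂)
              (ract (m₁ - m₂) g₂) (ract (m₂ - m₃) (φ g₂))
              (ract (m₃ - ract m₃ (φ g₃ * g₃⁻¹)) (φ g₂))) ⊗ₜ[ℤ] lam g₀) := by
  refine ⟨fun f hf₀ _ hf₂ hG m₀ m₁ m₂ g₀ g₁ g₂ => ?_,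
    fun f hf₀ _ _ hf₃ hG m₀ m₁ m₂ m₃ g₀ g₁ g₂ g₃ => ?_⟩
  · rw [mcbX_cocycle_formulas_general φ hφ lam (n := 0) (f := fun v => f (v 0) (v 1) (v 2))
      (by simp [AdditiveAt, hf₀]) (by simp [AdditiveAt, hf₂])
      (fun v => hG (v 0) (v 1) (v 2)), sum_inner_exponents_two]
    simp [endTwist, consecutiveDiff, gki, ract_one]
  · rw [mcbX_cocycle_formulas_general φ hφ lam (n := 1) (f := fun v => f (v 0) (v 1) (v 2) (v 3))
      (by simp [AdditiveAt, hf₀]) (by simp [AdditiveAt, hf₃])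
      (fun v => hG (v 0) (v 1) (v 2) (v 3)), sum_inner_exponents_three]
    simp [endTwist, consecutiveDiff, gki_eq_prod_ofFn, List.ofFn_succ, ract_one]

end GAlex
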